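/- Let R be a TRS over sign(R), and let Σ = {f, ♯} ∪ sign(R), where f is a binary symbol not in sign(R) and ♯ is a constant not in sign(R). Then R preserves Σ-recognizability of finite tree languages (i.e., R*_Σ(L) is recognizable for every finite L ⊆ T_Σ) if and only if R preserves recognizability of finite tree languages (i.e., for every ranked alphabet Γ with sign(R) ⊆ Γ and every finite L ⊆ T_Γ, R*_Γ(L) is recognizable). -/

import Mathlib

set_option autoImplicit false

/-!
Basic framework: ranked alphabets, terms, term rewrite systems,
bottom-up tree automata, recognizability.
A ranked alphabet is modelled by a (finite) type `σ` together with an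
arity function `ar : σ → ℕ`.  `Tm.var n` denotes the variable `x_{n+1}`,
so `T_Σ(X_m)` corresponds to terms all of whose variables satisfy `n < m`,
and ground terms (`T_Σ`) are terms satisfying `Tm.Ground`.
-/

/-- Terms over the ranked alphabet `(σ, ar)` with variables `x₁, x₂, …`
(`var n` is `x_{n+1}`). -/
inductive Tm (σ : Type) (ar : σ → ℕ) : Type
  | var : ℕ → Tm σ ar
  | app : (f : σ) → (Fin (ar f) → Tm σ ar) → Tm σ ar

namespace Tm

variable {σ γ : Type} {ar : σ → ℕ} {arγ : γ → ℕ}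

/-- Application of a substitution `θ` (assigning a term to each variable). -/
def subst (θ : ℕ → Tm σ ar) : Tm σ ar → Tm σ ar
  | var n => θ n
  | app f ts => app f fun i => (ts i).subst θ

/-- A term is ground if it contains no variables. -/
def Ground : Tm σ ar → Prop
  | var _ => False
  | app _ ts => ∀ i, (ts i).Ground

/-- The set of (indices of) variables occurring in a term. -/
def vars : Tm σ ar → Set ℕ
  | var n => {n}
  | app _ ts => ⋃ i, (ts i).vars

/-- Number of occurrences of the variable `x_{n+1}` in a term. -/
def count (n : ℕ) : Tm σ ar → ℕ
  | var m => if m = n then 1 else 0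
  | app _ ts => ∑ i, (ts i).count n

/-- A term is linear if every variable occurs at most once in it. -/
def Linear (t : Tm σ ar) : Prop := ∀ n, t.count n ≤ 1

/-- The symbol `s` occurs in the term. -/
def symOccurs (s : σ) : Tm σ ar → Prop
  | var _ => False
  | app f ts => f = s ∨ ∃ i, (ts i).symOccurs s

/-- Height of a term (constants and variables have height 0). -/
def height : Tm σ ar → ℕ
  | var _ => 0
  | app _ ts => Finset.univ.sup fun i => (ts i).height + 1

/-- Renaming of the alphabet along an arity-preserving map. -/
def map (ι : σ → γ) (h : ∀ s, arγ (ι s) = ar s) : Tm σ ar → Tm γ arγ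
  | var n => var n
  | app f ts => app (ι f) fun i => (ts (Fin.cast (h f) i)).map ι h

/-- The subterm of `t` at a position (a list of argument indices), if defined. -/
def subAt : Tm σ ar → List ℕ → Option (Tm σ ar)
  | t, [] => some t
  | var _, _ :: _ => none
  | app f ts, i :: p => if h : i < ar f then (ts ⟨i, h⟩).subAt p else none

/-- Subterm relation. -/
inductive Subtm : Tm σ ar → Tm σ ar → Prop
  | refl (t : Tm σ ar) : Subtm t t
  | app {s : Tm σ ar} {f : σ} {ts : Fin (ar f) → Tm σ ar} (i : Fin (ar f)) :
      Subtm s (ts i) → Subtm s (Tm.app f ts)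

end Tm

section Rewriting

variable {σ γ : Type} {ar : σ → ℕ} {arγ : γ → ℕ}

/-- One-step rewriting by the rule set `R`: apply a rule under a substitution
at the root, or rewrite inside one argument. -/
inductive Step (R : Set (Tm σ ar × Tm σ ar)) : Tm σ ar → Tm σ ar → Prop
  | rule {l r : Tm σ ar} (θ : ℕ → Tm σ ar) (h : (l, r) ∈ R) :
      Step R (l.subst θ) (r.subst θ)
  | congr {f : σ} {ts : Fin (ar f) → Tm σ ar} {t' : Tm σ ar} (i : Fin (ar f)) :
      Step R (ts i) t' → Step R (Tm.app f ts) (Tm.app f (Function.update ts i t'))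

/-- Many-step rewriting: reflexive-transitive closure of `Step`. -/
def Steps (R : Set (Tm σ ar × Tm σ ar)) : Tm σ ar → Tm σ ar → Prop :=
  Relation.ReflTransGen (Step R)

/-- `R` is a term rewrite system: finitely many rules, and every variable of a
right-hand side occurs in the corresponding left-hand side. -/
def IsTRS (R : Set (Tm σ ar × Tm σ ar)) : Prop :=
  R.Finite ∧ ∀ lr ∈ R, lr.2.vars ⊆ lr.1.vars

/-- The set `R*(L)` of descendants of members of `L`. -/
def Desc (R : Set (Tm σ ar × Tm σ ar)) (L : Set (Tm σ ar)) : Set (Tm σ ar) :=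
  {p | ∃ q ∈ L, Steps R q p}

/-- `R` is terminating: there is no infinite reduction sequence. -/
def Terminating (R : Set (Tm σ ar × Tm σ ar)) : Prop :=
  ¬ ∃ f : ℕ → Tm σ ar, ∀ n, Step R (f n) (f (n + 1))

/-- `R` is confluent. -/
def Confluent (R : Set (Tm σ ar × Tm σ ar)) : Prop :=
  ∀ a b c, Steps R a b → Steps R a c → ∃ d, Steps R b d ∧ Steps R c d

/-- `u` is an `R`-normal form of `t`. -/
def NormalFormOf (R : Set (Tm σ ar × Tm σ ar)) (t u : Tm σ ar) : Prop :=
  Steps R t u ∧ ¬ ∃ v, Step R u v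

/-- The term is a variable. -/
def IsVarTm (t : Tm σ ar) : Prop := ∃ n, t = Tm.var n

/-- Every left-hand side is linear. -/
def LeftLinearTRS (R : Set (Tm σ ar × Tm σ ar)) : Prop :=
  ∀ lr ∈ R, lr.1.Linear

/-- All left- and right-hand sides are linear. -/
def LinearTRS (R : Set (Tm σ ar × Tm σ ar)) : Prop :=
  ∀ lr ∈ R, lr.1.Linear ∧ lr.2.Linear

/-- No rule has a variable as left-hand side or as right-hand side. -/
def CollapseFree (R : Set (Tm σ ar × Tm σ ar)) : Prop :=
  ∀ lr ∈ R, ¬ IsVarTm lr.1 ∧ ¬ IsVarTm lr.2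

/-- Transport of a rule set along an arity-preserving renaming of the alphabet. -/
def mapRules (ι : σ → γ) (h : ∀ s, arγ (ι s) = ar s) (R : Set (Tm σ ar × Tm σ ar)) :
    Set (Tm γ arγ × Tm γ arγ) :=
  (fun lr => (lr.1.map ι h, lr.2.map ι h)) '' R

end Rewriting

/-- A bottom-up tree automaton over `(σ, ar)` with state type `Q`:
transition rules `δ(q₁,…,qₙ) → q`, λ-rules `q → q'`, and final states. -/
structure BTA (σ : Type) (ar : σ → ℕ) (Q : Type) where
  trans : ∀ f : σ, (Fin (ar f) → Q) → Q → Prop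
  eps : Q → Q → Prop
  final : Q → Prop

namespace BTA

variable {σ : Type} {ar : σ → ℕ} {Q : Type}

/-- `t →* q`: the (ground) term `t` can be rewritten to the state `q`. -/
inductive Reach (A : BTA σ ar Q) : Tm σ ar → Q → Prop
  | app {f : σ} {ts : Fin (ar f) → Tm σ ar} {qs : Fin (ar f) → Q} {q : Q} :
      (∀ i, Reach A (ts i) (qs i)) → A.trans f qs q → Reach A (Tm.app f ts) q
  | eps {t : Tm σ ar} {q q' : Q} : Reach A t q → A.eps q q' → Reach A t q'

/-- The tree language recognized by the automaton. -/
def Lang (A : BTA σ ar Q) : Set (Tm σ ar) := {t | ∃ q, A.final q ∧ A.Reach t q}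

end BTA

/-- A tree language is recognizable if some bottom-up tree automaton with a
finite state set recognizes it. -/
def Recognizable {σ : Type} {ar : σ → ℕ} (L : Set (Tm σ ar)) : Prop :=
  ∃ (Q : Type) (_ : Finite Q) (A : BTA σ ar Q), A.Lang = L

/-- `R` (a TRS over all of `σ`, thought of as `sign(R)`) preserves
recognizability of finite tree languages: for every ranked alphabet extending
`σ` (i.e. every finite type with an arity-preserving injection from `σ`) and
every finite tree language of ground terms, the descendant set is recognizable. -/
def PRF {σ : Type} {ar : σ → ℕ} (R : Set (Tm σ ar × Tm σ ar)) : Prop :=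
  ∀ (γ : Type) (arγ : γ → ℕ), Finite γ →
    ∀ ι : σ → γ, Function.Injective ι →
      ∀ h : ∀ s, arγ (ι s) = ar s,
        ∀ L : Set (Tm γ arγ), L.Finite → (∀ t ∈ L, t.Ground) →
          Recognizable (Desc (mapRules ι h R) L)

/-- `R` preserves recognizability: as `PRF`, but for arbitrary recognizable
tree languages. -/
def PR {σ : Type} {ar : σ → ℕ} (R : Set (Tm σ ar × Tm σ ar)) : Prop :=
  ∀ (γ : Type) (arγ : γ → ℕ), Finite γ →
    ∀ ι : σ → γ, Function.Injective ι →
      ∀ h : ∀ s, arγ (ι s) = ar s,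
        ∀ L : Set (Tm γ arγ), Recognizable L →
          Recognizable (Desc (mapRules ι h R) L)

/-! ### Extending an alphabet by a fresh binary symbol `f` and a fresh
constant `♯`: the alphabet `γ ⊕ Bool`, where `Sum.inr true` is `f` (arity 2)
and `Sum.inr false` is `♯` (arity 0). -/

/-- Arity function of `Σ = {f, ♯} ∪ Γ`. -/
def arExt {γ : Type} (arγ : γ → ℕ) : γ ⊕ Bool → ℕ :=
  Sum.elim arγ fun b => cond b 2 0

/-! ### Statement 8: P`Σ`RF ↔ PRF for `Σ = {f, ♯} ∪ sign(R)`. -/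

theorem arExt_inl {σ : Type} {ar : σ → ℕ} (s : σ) : arExt ar (Sum.inl s) = ar s := rfl

namespace Tm

variable {σ : Type} {ar : σ → ℕ}

/-- The term `f(u, v)`, where `f` is the fresh binary symbol. -/
def pair (u v : Tm (σ ⊕ Bool) (arExt ar)) : Tm (σ ⊕ Bool) (arExt ar) :=
  app (Sum.inr true) fun i : Fin 2 => if i = 0 then u else v

/-- The fresh constant `♯`. -/
def sharp : Tm (σ ⊕ Bool) (arExt ar) := app (Sum.inr false) fun i : Fin 0 => i.elim0

theorem app_inr_true (ts : Fin (arExt ar (Sum.inr true)) → Tm (σ ⊕ Bool) (arExt ar)) :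
    app (Sum.inr true) ts = pair (ts (0 : Fin 2)) (ts (1 : Fin 2)) := by
  unfold pair
  congr 1
  funext i
  change Fin 2 at i
  fin_cases i <;> rfl

theorem app_inr_false (ts : Fin (arExt ar (Sum.inr false)) → Tm (σ ⊕ Bool) (arExt ar)) :
    app (Sum.inr false) ts = sharp := by
  unfold sharp
  congr 1
  funext i
  exact Fin.elim0 i

/-- Structural induction over `Σ = {f, ♯} ∪ sign(R)`. -/
theorem ext_induction {P : Tm (σ ⊕ Bool) (arExt ar) → Prop} (hvar : ∀ n, P (var n))
    (happ : ∀ (s : σ) (ts : Fin (ar s) → Tm (σ ⊕ Bool) (arExt ar)),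
      (∀ i, P (ts i)) → P (app (Sum.inl s) ts))
    (hpair : ∀ u v, P u → P v → P (pair u v)) (hsharp : P sharp) (t) : P t := by
  induction t with
  | var n => exact hvar n
  | app f ts ih =>
    rcases f with s | (_ | _)
    · exact happ s ts ih
    · rw [app_inr_false]; exact hsharp
    · rw [app_inr_true]; exact hpair _ _ (ih _) (ih _)

/-- The right comb `f(a₀, f(a₁, … f(aₗ₋₁, ♯)))`. -/
def comb : ℕ → (ℕ → Tm (σ ⊕ Bool) (arExt ar)) → Tm (σ ⊕ Bool) (arExt ar)
  | 0, _ => sharp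
  | l + 1, a => pair (a 0) (comb l fun k => a (k + 1))

/-- No path that starts at the root and turns right at every `f` ends in `♯` or a variable. -/
def Pure : Tm (σ ⊕ Bool) (arExt ar) → Prop
  | var _ => False
  | app (Sum.inl _) ts => ∀ i, Pure (ts i)
  | app (Sum.inr true) ts => Pure (ts (1 : Fin 2))
  | app (Sum.inr false) _ => False

/-- Every topmost occurrence of `f` or `♯` heads a comb with `l` teeth, where the symbols of
`sign(R)` are ignored along the spine. -/
def HasTeeth : Tm (σ ⊕ Bool) (arExt ar) → ℕ → Prop
  | var _, _ => False
  | app (Sum.inl _) ts, l => ∀ i, HasTeeth (ts i) l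
  | app (Sum.inr true) _, 0 => False
  | app (Sum.inr true) ts, l + 1 => HasTeeth (ts (1 : Fin 2)) l
  | app (Sum.inr false) _, l => l = 0

@[simp] theorem not_pure_var (n : ℕ) : ¬ Pure (var n : Tm (σ ⊕ Bool) (arExt ar)) := by
  simp [Pure]

@[simp] theorem pure_app (s : σ) (ts : Fin (ar s) → Tm (σ ⊕ Bool) (arExt ar)) :
    Pure (app (Sum.inl s) ts) ↔ ∀ i, Pure (ts i) := by
  simp only [Pure]; rfl

@[simp] theorem pure_pair (u v : Tm (σ ⊕ Bool) (arExt ar)) : Pure (pair u v) ↔ Pure v := by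
  simp [Pure, pair]

@[simp] theorem not_pure_sharp : ¬ Pure (sharp : Tm (σ ⊕ Bool) (arExt ar)) := by
  simp [Pure, sharp]

@[simp] theorem hasTeeth_var (n l : ℕ) : ¬ HasTeeth (var n : Tm (σ ⊕ Bool) (arExt ar)) l := by
  simp [HasTeeth]

@[simp] theorem hasTeeth_app (s : σ) (ts : Fin (ar s) → Tm (σ ⊕ Bool) (arExt ar)) (l : ℕ) :
    HasTeeth (app (Sum.inl s) ts) l ↔ ∀ i, HasTeeth (ts i) l := by
  simp only [HasTeeth]; rfl

@[simp] theorem hasTeeth_pair_zero (u v : Tm (σ ⊕ Bool) (arExt ar)) :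
    ¬ HasTeeth (pair u v) 0 := by
  simp [HasTeeth, pair]

@[simp] theorem hasTeeth_pair_succ (u v : Tm (σ ⊕ Bool) (arExt ar)) (l : ℕ) :
    HasTeeth (pair u v) (l + 1) ↔ HasTeeth v l := by
  simp [HasTeeth, pair]

@[simp] theorem hasTeeth_sharp (l : ℕ) :
    HasTeeth (sharp : Tm (σ ⊕ Bool) (arExt ar)) l ↔ l = 0 := by
  simp [HasTeeth, sharp]

theorem HasTeeth.eq_or_pure {t : Tm (σ ⊕ Bool) (arExt ar)} :
    ∀ {l l' : ℕ}, HasTeeth t l → HasTeeth t l' → l = l' ∨ Pure t := by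
  induction t using ext_induction with
  | hvar n => simp
  | happ s ts ih =>
    intro l l' h h'
    simp only [hasTeeth_app, pure_app] at *
    by_contra! hc
    obtain ⟨i, hi⟩ := hc.2
    exact hc.1 ((ih i (h i) (h' i)).resolve_right hi)
  | hpair u v _ ih =>
    intro l l' h h'
    cases l <;> cases l' <;> simp at h h' ⊢
    exact ih h h'
  | hsharp => simp

@[simp] theorem not_pure_comb (l : ℕ) (a : ℕ → Tm (σ ⊕ Bool) (arExt ar)) :
    ¬ Pure (comb l a) := by
  induction l generalizing a with
  | zero => simp [comb]
  | succ l ih => simp [comb, ih]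

theorem hasTeeth_comb (l : ℕ) (a : ℕ → Tm (σ ⊕ Bool) (arExt ar)) : HasTeeth (comb l a) l := by
  induction l generalizing a with
  | zero => simp [comb]
  | succ l ih => simp [comb, ih]

end Tm

section Rewriting

variable {σ γ : Type} {ar : σ → ℕ} {arγ : γ → ℕ}

theorem Steps.update {R : Set (Tm σ ar × Tm σ ar)} {f : σ} (ts : Fin (ar f) → Tm σ ar)
    (i : Fin (ar f)) {t t' : Tm σ ar} (h : Steps R t t') :
    Steps R (Tm.app f (Function.update ts i t)) (Tm.app f (Function.update ts i t')) := by
  induction h with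
  | refl => exact .refl
  | tail _ hs ih =>
    refine ih.tail ?_
    have := Step.congr (R := R) (ts := Function.update ts i _) i
      (by rw [Function.update_self]; exact hs)
    rwa [Function.update_idem] at this

theorem Steps.app {R : Set (Tm σ ar × Tm σ ar)} {f : σ} {ts ts' : Fin (ar f) → Tm σ ar}
    (h : ∀ i, Steps R (ts i) (ts' i)) : Steps R (Tm.app f ts) (Tm.app f ts') := by
  have key : ∀ S : Finset (Fin (ar f)),
      Steps R (Tm.app f ts) (Tm.app f (S.piecewise ts' ts)) := by
    intro S
    induction S using Finset.induction_on with
    | empty => rw [Finset.piecewise_empty]; exact .refl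
    | insert i S hi ih =>
      rw [Finset.piecewise_insert]
      have := Steps.update (S.piecewise ts' ts) i (h i)
      rw [Function.update_eq_self_iff.2 (by simp [hi])] at this
      exact ih.trans this
  simpa using key Finset.univ

theorem Steps.pair {R : Set (Tm (σ ⊕ Bool) (arExt ar) × Tm (σ ⊕ Bool) (arExt ar))}
    {u u' v v' : Tm (σ ⊕ Bool) (arExt ar)} (hu : Steps R u u') (hv : Steps R v v') :
    Steps R (Tm.pair u v) (Tm.pair u' v') := by
  refine Steps.app fun i => ?_
  change Fin 2 at i
  fin_cases i
  exacts [hu, hv]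

theorem Steps.comb {R : Set (Tm (σ ⊕ Bool) (arExt ar) × Tm (σ ⊕ Bool) (arExt ar))} (l : ℕ)
    {a a' : ℕ → Tm (σ ⊕ Bool) (arExt ar)} (h : ∀ k, Steps R (a k) (a' k)) :
    Steps R (Tm.comb l a) (Tm.comb l a') := by
  induction l generalizing a a' with
  | zero => exact .refl
  | succ l ih => exact Steps.pair (h 0) (ih fun k => h (k + 1))

/-- Rules map along a function that commutes with all symbols of the rules. -/
theorem Tm.subst_map_of_comm {β : Type} {arβ : β → ℕ} {ι : σ → γ}
    (h : ∀ s, arγ (ι s) = ar s) {κ : σ → β} (h' : ∀ s, arβ (κ s) = ar s)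
    (F : Tm γ arγ → Tm β arβ)
    (hF : ∀ (s : σ) (ts : Fin (ar s) → Tm γ arγ),
      F (Tm.app (ι s) fun i => ts (Fin.cast (h s) i)) =
        Tm.app (κ s) fun i => F (ts (Fin.cast (h' s) i)))
    (θ : ℕ → Tm γ arγ) (t : Tm σ ar) :
    F ((t.map ι h).subst θ) = (t.map κ h').subst fun n => F (θ n) := by
  induction t with
  | var n => rfl
  | app s ts ih =>
    simp only [Tm.map, Tm.subst]
    rw [hF s fun i => ((ts i).map ι h).subst θ]
    simp only [ih]

theorem Tm.forall_vars_of_comm (P : Tm (σ ⊕ Bool) (arExt ar) → Prop)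
    (hP : ∀ (s : σ) (ts : Fin (ar s) → Tm (σ ⊕ Bool) (arExt ar)),
      P (Tm.app (Sum.inl s) ts) ↔ ∀ i, P (ts i))
    (θ : ℕ → Tm (σ ⊕ Bool) (arExt ar)) (t : Tm σ ar) :
    P ((t.map Sum.inl arExt_inl).subst θ) ↔
      ∀ n ∈ t.vars, P (θ n) := by
  induction t with
  | var n => simp [Tm.map, Tm.subst, Tm.vars]
  | app s ts ih =>
    simp only [Tm.map, Tm.subst, Tm.vars, Set.mem_iUnion]
    refine (hP s _).trans ((forall_congr' fun i => ih i).trans ?_)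
    exact ⟨fun H n ⟨i, hn⟩ => H i n hn, fun H i n hn => H n ⟨i, hn⟩⟩

/-- The rules of `R` over `Σ = {f, ♯} ∪ sign(R)`. -/
abbrev extRules (R : Set (Tm σ ar × Tm σ ar)) :
    Set (Tm (σ ⊕ Bool) (arExt ar) × Tm (σ ⊕ Bool) (arExt ar)) :=
  mapRules Sum.inl arExt_inl R

/-- Induction over rewrite steps over `Σ = {f, ♯} ∪ sign(R)`. -/
theorem Step.ext_induction {R : Set (Tm σ ar × Tm σ ar)}
    {P : Tm (σ ⊕ Bool) (arExt ar) → Tm (σ ⊕ Bool) (arExt ar) → Prop}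
    (hrule : ∀ l r θ, (l, r) ∈ R →
      P ((l.map Sum.inl arExt_inl).subst θ)
        ((r.map Sum.inl arExt_inl).subst θ))
    (happ : ∀ (s : σ) (ts ts' : Fin (ar s) → Tm (σ ⊕ Bool) (arExt ar)) (i : Fin (ar s)),
      P (ts i) (ts' i) → (∀ j, j ≠ i → ts' j = ts j) →
      P (Tm.app (Sum.inl s) ts) (Tm.app (Sum.inl s) ts'))
    (hleft : ∀ u u' v, P u u' → P (Tm.pair u v) (Tm.pair u' v))
    (hright : ∀ u v v', Step (extRules R) v v' → P v v' → P (Tm.pair u v) (Tm.pair u v'))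
    {t t'} (h : Step (extRules R) t t') : P t t' := by
  induction h with
  | rule θ hlr =>
    obtain ⟨⟨l, r⟩, hR, he⟩ := hlr
    obtain ⟨rfl, rfl⟩ := Prod.mk.inj he
    exact hrule l r θ hR
  | @congr f ts t' i hs ih =>
    rcases f with s | (_ | _)
    · refine happ s ts (Function.update ts i t') i ?_ fun j hj => Function.update_of_ne hj _ _
      exact (Function.update_self (f := ts) i t').symm ▸ ih
    · exact Fin.elim0 i
    · rw [Tm.app_inr_true, Tm.app_inr_true]
      change Fin 2 at i
      fin_cases i
      · exact hleft _ _ _ ih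
      · exact hright _ _ _ hs ih

theorem Step.preserves {R : Set (Tm σ ar × Tm σ ar)} (hR : ∀ lr ∈ R, lr.2.vars ⊆ lr.1.vars)
    {P : Tm (σ ⊕ Bool) (arExt ar) → Prop}
    (hP : ∀ (s : σ) (ts : Fin (ar s) → Tm (σ ⊕ Bool) (arExt ar)),
      P (Tm.app (Sum.inl s) ts) ↔ ∀ i, P (ts i))
    (hleft : ∀ u u' v, (P u → P u') → P (Tm.pair u v) → P (Tm.pair u' v))
    (hright : ∀ u v v', Step (extRules R) v v' → (P v → P v') →
      P (Tm.pair u v) → P (Tm.pair u v'))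
    {t t'} (h : Step (extRules R) t t') : P t → P t' := by
  refine Step.ext_induction (P := fun t t' => P t → P t') ?_ ?_ hleft hright h
  · intro l r θ hlr
    rw [Tm.forall_vars_of_comm P hP, Tm.forall_vars_of_comm P hP]
    exact fun H n hn => H n (hR _ hlr hn)
  · intro s ts ts' i ih hne
    rw [hP, hP]
    intro H j
    by_cases hj : j = i
    · subst hj; exact ih (H j)
    · rw [hne j hj]; exact H j

theorem Step.pure {R : Set (Tm σ ar × Tm σ ar)} (hR : ∀ lr ∈ R, lr.2.vars ⊆ lr.1.vars)
    {t t'} (h : Step (extRules R) t t') : t.Pure → t'.Pure :=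
  h.preserves hR Tm.pure_app (by simp) (by simp)

theorem Step.hasTeeth {R : Set (Tm σ ar × Tm σ ar)} (hR : ∀ lr ∈ R, lr.2.vars ⊆ lr.1.vars)
    {t t'} (h : Step (extRules R) t t') : ∀ {l}, t.HasTeeth l → t'.HasTeeth l := by
  refine Step.ext_induction (P := fun t t' => ∀ {l}, t.HasTeeth l → t'.HasTeeth l) ?_ ?_ ?_ ?_ h
  · intro l r θ hlr k
    rw [Tm.forall_vars_of_comm (Tm.HasTeeth · k) fun s ts => Tm.hasTeeth_app s ts k,
      Tm.forall_vars_of_comm (Tm.HasTeeth · k) fun s ts => Tm.hasTeeth_app s ts k]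
    exact fun H n hn => H n (hR _ hlr hn)
  · intro s ts ts' i ih hne k
    simp only [Tm.hasTeeth_app]
    intro H j
    by_cases hj : j = i
    · subst hj; exact ih (H j)
    · rw [hne j hj]; exact H j
  · rintro u u' v - (_ | l) <;> simp
  · rintro u v v' - ih (_ | l) <;> simp
    exact ih

end Rewriting

section Coding

variable {σ γ : Type} {ar : σ → ℕ} {arγ : γ → ℕ} (ι : σ → γ) (h : ∀ s, arγ (ι s) = ar s)

namespace Tm

open Classical in
/-- Replace by `t` every topmost subterm headed by `f`, `♯` or a variable; a `Pure` such subterm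
is replaced by what its right branch yields. -/
noncomputable def plug (t : Tm γ arγ) : Tm (σ ⊕ Bool) (arExt ar) → Tm γ arγ
  | var _ => t
  | app (Sum.inl s) ts => app (ι s) fun i => plug t (ts (Fin.cast (h s) i))
  | app (Sum.inr true) ts =>
    if Pure (ts (1 : Fin 2)) then plug t (ts (1 : Fin 2)) else t
  | app (Sum.inr false) _ => t

@[simp] theorem plug_app (t : Tm γ arγ) (s : σ) (ts : Fin (ar s) → Tm (σ ⊕ Bool) (arExt ar)) :
    plug ι h t (app (Sum.inl s) ts) = app (ι s) fun i => plug ι h t (ts (Fin.cast (h s) i)) := by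
  simp only [plug]; rfl

open Classical in
theorem plug_pair (t : Tm γ arγ) (u v : Tm (σ ⊕ Bool) (arExt ar)) :
    plug ι h t (pair u v) = if Pure v then plug ι h t v else t := by
  simp only [plug, pair]
  rfl

theorem plug_eq_of_pure {w : Tm (σ ⊕ Bool) (arExt ar)} (t t' : Tm γ arγ) (hw : Pure w) :
    plug ι h t w = plug ι h t' w := by
  induction w using ext_induction with
  | hvar n => simp at hw
  | happ s ts ih =>
    simp only [pure_app] at hw
    simp only [plug_app, ih _ (hw _)]
  | hpair u v _ ih =>
    simp only [pure_pair] at hw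
    simp only [plug_pair, hw, if_true, ih hw]
  | hsharp => simp at hw

theorem plug_comb (t : Tm γ arγ) (l : ℕ) (a : ℕ → Tm (σ ⊕ Bool) (arExt ar)) :
    plug ι h t (comb l a) = t := by
  cases l with
  | zero => simp [comb, sharp, plug]
  | succ l => simp [comb, plug_pair]

/-- Every right argument `v` of `f` consists of combs of a common length, and every term
rewrites to any instance of the context of these combs in `v`. -/
def Good (R : Set (Tm γ arγ × Tm γ arγ)) : Tm (σ ⊕ Bool) (arExt ar) → Prop
  | var _ => True
  | app (Sum.inl _) ts => ∀ i, Good R (ts i)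
  | app (Sum.inr true) ts => Good R (ts (0 : Fin 2)) ∧ Good R (ts (1 : Fin 2)) ∧
      (∀ t, Steps R t (plug ι h t (ts (1 : Fin 2)))) ∧ ∃ l, HasTeeth (ts (1 : Fin 2)) l
  | app (Sum.inr false) _ => True

theorem good_app (R : Set (Tm γ arγ × Tm γ arγ)) (s : σ)
    (ts : Fin (ar s) → Tm (σ ⊕ Bool) (arExt ar)) :
    Good ι h R (app (Sum.inl s) ts) ↔ ∀ i, Good ι h R (ts i) := by
  simp only [Good]; rfl

theorem good_pair (R : Set (Tm γ arγ × Tm γ arγ)) (u v : Tm (σ ⊕ Bool) (arExt ar)) :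
    Good ι h R (pair u v) ↔ Good ι h R u ∧ Good ι h R v ∧
      (∀ t, Steps R t (plug ι h t v)) ∧ ∃ l, HasTeeth v l := by
  simp [Good, pair]

theorem good_comb (R : Set (Tm γ arγ × Tm γ arγ)) (l : ℕ) (a : ℕ → Tm (σ ⊕ Bool) (arExt ar))
    (ha : ∀ k, Good ι h R (a k)) : Good ι h R (comb l a) := by
  induction l generalizing a with
  | zero => simp [comb, sharp, Good]
  | succ l ih =>
    rw [comb, good_pair]
    refine ⟨ha 0, ih _ fun k => ha (k + 1), fun t => ?_, l, hasTeeth_comb _ _⟩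
    rw [plug_comb]
    exact .refl

end Tm

section

variable {ι h} {R : Set (Tm σ ar × Tm σ ar)}

theorem Step.of_comm {F : Tm (σ ⊕ Bool) (arExt ar) → Tm γ arγ}
    (hF : ∀ (s : σ) (ts : Fin (ar s) → Tm (σ ⊕ Bool) (arExt ar)),
      F (Tm.app (Sum.inl s) ts) = Tm.app (ι s) fun i => F (ts (Fin.cast (h s) i)))
    {l r : Tm σ ar} (hlr : (l, r) ∈ R) (θ : ℕ → Tm (σ ⊕ Bool) (arExt ar)) :
    Step (mapRules ι h R) (F ((l.map Sum.inl arExt_inl).subst θ))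
      (F ((r.map Sum.inl arExt_inl).subst θ)) := by
  rw [Tm.subst_map_of_comm arExt_inl h F hF,
    Tm.subst_map_of_comm arExt_inl h F hF]
  exact .rule _ ⟨_, hlr, rfl⟩

theorem Steps.of_comm_app {F : Tm (σ ⊕ Bool) (arExt ar) → Tm γ arγ}
    (hF : ∀ (s : σ) (ts : Fin (ar s) → Tm (σ ⊕ Bool) (arExt ar)),
      F (Tm.app (Sum.inl s) ts) = Tm.app (ι s) fun i => F (ts (Fin.cast (h s) i)))
    {s : σ} {ts ts' : Fin (ar s) → Tm (σ ⊕ Bool) (arExt ar)} {i : Fin (ar s)}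
    (hi : Steps (mapRules ι h R) (F (ts i)) (F (ts' i))) (hne : ∀ j, j ≠ i → ts' j = ts j) :
    Steps (mapRules ι h R) (F (Tm.app (Sum.inl s) ts)) (F (Tm.app (Sum.inl s) ts')) := by
  rw [hF, hF]
  refine Steps.app fun j => ?_
  by_cases hj : Fin.cast (h s) j = i
  · subst hj; exact hi
  · rw [hne _ hj]; exact .refl

theorem Step.plug (hR : ∀ lr ∈ R, lr.2.vars ⊆ lr.1.vars)
    {w w'} (hs : Step (extRules R) w w') (t : Tm γ arγ) :
    w.Good ι h (mapRules ι h R) →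
      Steps (mapRules ι h R) (Tm.plug ι h t w) (Tm.plug ι h t w') := by
  refine Step.ext_induction (P := fun w w' => w.Good ι h (mapRules ι h R) →
      Steps (mapRules ι h R) (Tm.plug ι h t w) (Tm.plug ι h t w')) ?_ ?_ ?_ ?_ hs
  · intro l r θ hlr _
    exact .single (Step.of_comm (Tm.plug_app ι h t) hlr θ)
  · intro s ts ts' i ih hne hg
    rw [Tm.good_app] at hg
    exact Steps.of_comm_app (Tm.plug_app ι h t) (ih (hg i)) hne
  · intro u u' v _ _
    rw [Tm.plug_pair, Tm.plug_pair]
    exact .refl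
  · intro u v v' hs ih hg
    rw [Tm.good_pair] at hg
    rw [Tm.plug_pair, Tm.plug_pair]
    by_cases hv : v.Pure
    · rw [if_pos hv, if_pos (hs.pure hR hv)]
      exact ih hg.2.1
    · rw [if_neg hv]
      split_ifs
      · exact (hg.2.2.1 t).trans (ih hg.2.1)
      · exact .refl

theorem Step.good (hR : ∀ lr ∈ R, lr.2.vars ⊆ lr.1.vars)
    {w w'} (hs : Step (extRules R) w w') :
    w.Good ι h (mapRules ι h R) → w'.Good ι h (mapRules ι h R) := by
  refine hs.preserves hR (Tm.good_app ι h _) ?_ ?_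
  · intro u u' v ih
    rw [Tm.good_pair, Tm.good_pair]
    exact fun hg => ⟨ih hg.1, hg.2⟩
  · intro u v v' hs ih
    rw [Tm.good_pair, Tm.good_pair]
    rintro ⟨hu, hv, ht, l, hl⟩
    exact ⟨hu, ih hv, fun t => (ht t).trans (hs.plug hR t hv), l, hs.hasTeeth hR hl⟩

end

variable (c : γ → ℕ)

namespace Tm

open Classical in
/-- The term coded by a comb with right part `v` and decoded teeth `a`. -/
noncomputable def decodeHead (v : Tm (σ ⊕ Bool) (arExt ar)) (a : ℕ → Tm γ arγ) : Tm γ arγ :=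
  if Pure v then plug ι h (var 0) v
  else if hg : ∃ g, HasTeeth v (c g) then app hg.choose fun i => a i
  else var 0

/-- `decode t 0` is the term coded by `t`, and `decode t (k + 1)` the one coded by the `k`-th
tooth of the comb `t`. -/
noncomputable def decode : Tm (σ ⊕ Bool) (arExt ar) → ℕ → Tm γ arγ
  | var n, _ => var n
  | app (Sum.inl s) ts, k => app (ι s) fun i => decode (ts (Fin.cast (h s) i)) k
  | app (Sum.inr true) ts, 0 => decodeHead ι h c (ts (1 : Fin 2)) fun
    | 0 => decode (ts (0 : Fin 2)) 0
    | k + 1 => decode (ts (1 : Fin 2)) (k + 1)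
  | app (Sum.inr true) ts, 1 => decode (ts (0 : Fin 2)) 0
  | app (Sum.inr true) ts, k + 2 => decode (ts (1 : Fin 2)) (k + 1)
  | app (Sum.inr false) _, _ => var 0

theorem decode_app (k : ℕ) (s : σ) (ts : Fin (ar s) → Tm (σ ⊕ Bool) (arExt ar)) :
    decode ι h c (app (Sum.inl s) ts) k =
      app (ι s) fun i => decode ι h c (ts (Fin.cast (h s) i)) k := by
  simp only [decode]; rfl

theorem decode_pair_succ (u v : Tm (σ ⊕ Bool) (arExt ar)) (k : ℕ) :
    decode ι h c (pair u v) (k + 1) =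
      if k = 0 then decode ι h c u 0 else decode ι h c v k := by
  cases k <;> simp [decode, pair]

theorem decode_pair_zero (u v : Tm (σ ⊕ Bool) (arExt ar)) :
    decode ι h c (pair u v) 0 =
      decodeHead ι h c v fun k => decode ι h c (pair u v) (k + 1) := by
  rw [pair, decode.eq_def]
  dsimp only
  congr 1
  funext k
  cases k <;> simp [decode]

theorem decodeHead_of_hasTeeth (hc : Function.Injective c) {g : γ}
    {v : Tm (σ ⊕ Bool) (arExt ar)} (hv : ¬ Pure v) (hg : HasTeeth v (c g))
    (a : ℕ → Tm γ arγ) : decodeHead ι h c v a = app g fun i => a i := by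
  have hex : ∃ g, HasTeeth v (c g) := ⟨g, hg⟩
  have : hex.choose = g := hc ((hex.choose_spec.eq_or_pure hg).resolve_right hv)
  rw [decodeHead, if_neg hv, dif_pos hex, this]

theorem decode_comb (l : ℕ) (a : ℕ → Tm (σ ⊕ Bool) (arExt ar)) {k : ℕ} (hk : k < l) :
    decode ι h c (comb l a) (k + 1) = decode ι h c (a k) 0 := by
  induction l generalizing a k with
  | zero => omega
  | succ l ih =>
    rw [comb, decode_pair_succ]
    cases k with
    | zero => rfl
    | succ k => exact ih _ (by omega)

end Tm

variable {ι h c} {R : Set (Tm σ ar × Tm σ ar)}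

theorem Step.decode (hR : ∀ lr ∈ R, lr.2.vars ⊆ lr.1.vars) (hc : Function.Injective c)
    {w w'} (hs : Step (extRules R) w w') :
    w.Good ι h (mapRules ι h R) → ∀ k,
      Steps (mapRules ι h R) (Tm.decode ι h c w k) (Tm.decode ι h c w' k) := by
  refine Step.ext_induction (P := fun w w' => w.Good ι h (mapRules ι h R) → ∀ k,
      Steps (mapRules ι h R) (Tm.decode ι h c w k) (Tm.decode ι h c w' k)) ?_ ?_ ?_ ?_ hs
  · intro l r θ hlr _ k
    exact .single (Step.of_comm (F := (Tm.decode ι h c · k)) (Tm.decode_app ι h c k) hlr θ)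
  · intro s ts ts' i ih hne hg k
    rw [Tm.good_app] at hg
    exact Steps.of_comm_app (F := (Tm.decode ι h c · k)) (Tm.decode_app ι h c k)
      (ih (hg i) k) hne
  · intro u u' v ih hg k
    rw [Tm.good_pair] at hg
    have key : ∀ k, Steps (mapRules ι h R) (Tm.decode ι h c (Tm.pair u v) (k + 1))
        (Tm.decode ι h c (Tm.pair u' v) (k + 1)) := by
      intro k
      rw [Tm.decode_pair_succ, Tm.decode_pair_succ]
      split_ifs
      exacts [ih hg.1 0, .refl]
    cases k with
    | succ k => exact key k
    | zero =>
      rw [Tm.decode_pair_zero, Tm.decode_pair_zero]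
      unfold Tm.decodeHead
      split_ifs
      exacts [.refl, Steps.app fun i => key i, .refl]
  · intro u v v' hs ih hg k
    rw [Tm.good_pair] at hg
    obtain ⟨-, hv, ht, l, hl⟩ := hg
    have key : ∀ k, Steps (mapRules ι h R) (Tm.decode ι h c (Tm.pair u v) (k + 1))
        (Tm.decode ι h c (Tm.pair u v') (k + 1)) := by
      intro k
      rw [Tm.decode_pair_succ, Tm.decode_pair_succ]
      split_ifs
      exacts [.refl, ih hv k]
    cases k with
    | succ k => exact key k
    | zero =>
      rw [Tm.decode_pair_zero, Tm.decode_pair_zero]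
      by_cases hp' : v'.Pure
      · have : ∀ a, Tm.decodeHead ι h c v' a = Tm.plug ι h (Tm.var 0) v' := fun a => if_pos hp'
        rw [this]
        by_cases hp : v.Pure
        · rw [Tm.decodeHead, if_pos hp]
          exact hs.plug hR _ hv
        · generalize Tm.decodeHead ι h c v _ = t
          rw [Tm.plug_eq_of_pure ι h _ t hp']
          exact (ht t).trans (hs.plug hR t hv)
      · have hp : ¬ v.Pure := fun hp => hp' (hs.pure hR hp)
        have hl' := hs.hasTeeth hR hl
        by_cases hg : ∃ g, c g = l
        · obtain ⟨g, rfl⟩ := hg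
          rw [Tm.decodeHead_of_hasTeeth ι h c hc hp hl,
            Tm.decodeHead_of_hasTeeth ι h c hc hp' hl']
          exact Steps.app fun i => key i
        · rw [Tm.decodeHead, if_neg hp, dif_neg, Tm.decodeHead, if_neg hp', dif_neg]
          · exact .refl
          · exact fun ⟨g, h'⟩ => hg ⟨g, (h'.eq_or_pure hl').resolve_right hp'⟩
          · exact fun ⟨g, h'⟩ => hg ⟨g, (h'.eq_or_pure hl).resolve_right hp⟩

theorem Steps.decode (hR : ∀ lr ∈ R, lr.2.vars ⊆ lr.1.vars) (hc : Function.Injective c)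
    {w w'} (hs : Steps (extRules R) w w') (hw : w.Good ι h (mapRules ι h R)) (k : ℕ) :
    Steps (mapRules ι h R) (Tm.decode ι h c w k) (Tm.decode ι h c w' k) := by
  have : w'.Good ι h (mapRules ι h R) ∧
      Steps (mapRules ι h R) (Tm.decode ι h c w k) (Tm.decode ι h c w' k) := by
    induction hs with
    | refl => exact ⟨hw, .refl⟩
    | tail _ hs ih => exact ⟨hs.good hR ih.1, ih.2.trans (hs.decode hR hc ih.1 k)⟩
  exact this.2

variable (ι h c)

namespace Tm

open Classical in
/-- The code of `g(us)`, given the codes `us` of the arguments. -/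
noncomputable def encodeHead (g : γ) (us : Fin (arγ g) → Tm (σ ⊕ Bool) (arExt ar)) :
    Tm (σ ⊕ Bool) (arExt ar) :=
  if hg : ∃ s, ι s = g then
    app (Sum.inl hg.choose) fun i : Fin (ar hg.choose) =>
      us (Fin.cast ((h _).symm.trans (congrArg arγ hg.choose_spec)) i)
  else comb (c g + 1) fun k => if hk : k < arγ g then us ⟨k, hk⟩ else sharp

/-- The code of a term over `{f, ♯} ∪ sign(R)`: symbols outside `sign(R)` become combs. -/
noncomputable def encode : Tm γ arγ → Tm (σ ⊕ Bool) (arExt ar)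
  | var n => var n
  | app g ts => encodeHead ι h c g fun i => encode (ts i)

theorem encodeHead_apply (hι : Function.Injective ι) (s : σ)
    (us : Fin (arγ (ι s)) → Tm (σ ⊕ Bool) (arExt ar)) :
    encodeHead ι h c (ι s) us =
      app (Sum.inl s) fun i : Fin (ar s) => us (Fin.cast (h s).symm i) := by
  have hg : ∃ s', ι s' = ι s := ⟨s, rfl⟩
  rw [encodeHead, dif_pos hg]
  have key : ∀ s' (e : ι s' = ι s), app (Sum.inl s') (fun i : Fin (ar s') =>
      us (Fin.cast ((h _).symm.trans (congrArg arγ e)) i)) =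
      (app (Sum.inl s) fun i : Fin (ar s) => us (Fin.cast (h s).symm i) :
        Tm (σ ⊕ Bool) (arExt ar)) := by
    intro s' e
    obtain rfl := hι e
    rfl
  exact key _ hg.choose_spec

theorem encodeHead_of_not_mem {g : γ} (hg : ¬ ∃ s, ι s = g)
    (us : Fin (arγ g) → Tm (σ ⊕ Bool) (arExt ar)) :
    encodeHead ι h c g us =
      comb (c g + 1) fun k => if hk : k < arγ g then us ⟨k, hk⟩ else sharp :=
  dif_neg hg

theorem good_encode (hι : Function.Injective ι) (R : Set (Tm γ arγ × Tm γ arγ)) (t : Tm γ arγ) :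
    Good ι h R (encode ι h c t) := by
  induction t with
  | var n => trivial
  | app g ts ih =>
    rw [encode]
    by_cases hg : ∃ s, ι s = g
    · obtain ⟨s, rfl⟩ := hg
      rw [encodeHead_apply ι h c hι]
      exact (good_app ι h R s _).2 fun i => ih _
    · rw [encodeHead_of_not_mem ι h c hg]
      refine good_comb ι h R _ _ fun k => ?_
      split_ifs
      exacts [ih _, trivial]

theorem decode_encode (hι : Function.Injective ι) (hc : Function.Injective c)
    (hle : ∀ g, arγ g ≤ c g) (t : Tm γ arγ) : decode ι h c (encode ι h c t) 0 = t := by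
  induction t with
  | var n => simp [encode, decode]
  | app g ts ih =>
    rw [encode]
    by_cases hg : ∃ s, ι s = g
    · obtain ⟨s, rfl⟩ := hg
      rw [encodeHead_apply ι h c hι]
      refine (decode_app ι h c 0 s _).trans ?_
      congr 1
      funext i
      exact ih i
    · rw [encodeHead_of_not_mem ι h c hg]
      set a : ℕ → Tm (σ ⊕ Bool) (arExt ar) :=
        fun k => if hk : k < arγ g then encode ι h c (ts ⟨k, hk⟩) else sharp with ha
      have hz : decode ι h c (comb (c g + 1) a) 0 =
          decodeHead ι h c (comb (c g) fun k => a (k + 1)) fun k =>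
            decode ι h c (comb (c g + 1) a) (k + 1) := by
        rw [comb, decode_pair_zero]
      rw [hz, decodeHead_of_hasTeeth ι h c hc (not_pure_comb _ _) (hasTeeth_comb _ _)]
      congr 1
      funext i
      rw [decode_comb ι h c _ _ (by have := hle g; omega), ha]
      simpa using ih i

end Tm

variable {ι h c}

theorem Steps.encodeHead (hι : Function.Injective ι)
    {S : Set (Tm (σ ⊕ Bool) (arExt ar) × Tm (σ ⊕ Bool) (arExt ar))} {g : γ}
    {us us' : Fin (arγ g) → Tm (σ ⊕ Bool) (arExt ar)} (hu : ∀ i, Steps S (us i) (us' i)) :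
    Steps S (Tm.encodeHead ι h c g us) (Tm.encodeHead ι h c g us') := by
  by_cases hg : ∃ s, ι s = g
  · obtain ⟨s, rfl⟩ := hg
    rw [Tm.encodeHead_apply ι h c hι, Tm.encodeHead_apply ι h c hι]
    exact Steps.app fun i => hu _
  · rw [Tm.encodeHead_of_not_mem ι h c hg, Tm.encodeHead_of_not_mem ι h c hg]
    refine Steps.comb _ fun k => ?_
    split_ifs
    exacts [hu _, .refl]

theorem Step.encode (hι : Function.Injective ι) {t t' : Tm γ arγ}
    (hs : Step (mapRules ι h R) t t') :
    Steps (extRules R) (Tm.encode ι h c t) (Tm.encode ι h c t') := by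
  induction hs with
  | rule θ hlr =>
    obtain ⟨⟨l, r⟩, hlr, he⟩ := hlr
    obtain ⟨rfl, rfl⟩ := Prod.mk.inj he
    have hF : ∀ (s : σ) (ts : Fin (ar s) → Tm γ arγ),
        Tm.encode ι h c (Tm.app (ι s) fun i => ts (Fin.cast (h s) i)) =
          Tm.app (Sum.inl s) fun i => Tm.encode ι h c (ts i) := by
      intro s ts
      rw [Tm.encode, Tm.encodeHead_apply ι h c hι]
      rfl
    rw [Tm.subst_map_of_comm h arExt_inl (Tm.encode ι h c) hF,
      Tm.subst_map_of_comm h arExt_inl (Tm.encode ι h c) hF]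
    exact .single (.rule _ ⟨_, hlr, rfl⟩)
  | @congr g ts t' i _ ih =>
    rw [Tm.encode, Tm.encode]
    refine Steps.encodeHead hι fun j => ?_
    by_cases hj : j = i
    · subst hj; simpa using ih
    · rw [Function.update_of_ne hj]; exact .refl

theorem Steps.encode_iff (hR : ∀ lr ∈ R, lr.2.vars ⊆ lr.1.vars) (hι : Function.Injective ι)
    (hc : Function.Injective c) (hle : ∀ g, arγ g ≤ c g) {t t' : Tm γ arγ} :
    Steps (extRules R) (Tm.encode ι h c t) (Tm.encode ι h c t') ↔
      Steps (mapRules ι h R) t t' := by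
  constructor
  · intro hs
    have := hs.decode (c := c) hR hc (Tm.good_encode ι h c hι _ t) 0
    rwa [Tm.decode_encode ι h c hι hc hle, Tm.decode_encode ι h c hι hc hle] at this
  · intro hs
    induction hs with
    | refl => exact .refl
    | tail _ hs ih => exact ih.trans (hs.encode hι)

theorem Tm.Ground.comb {l : ℕ} {a : ℕ → Tm (σ ⊕ Bool) (arExt ar)} (ha : ∀ k, (a k).Ground) :
    (Tm.comb l a).Ground := by
  induction l generalizing a with
  | zero => exact fun i => Fin.elim0 i
  | succ l ih =>
    intro i
    change Fin 2 at i
    fin_cases i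
    exacts [ha 0, ih fun k => ha (k + 1)]

theorem Tm.Ground.encode (hι : Function.Injective ι) {t : Tm γ arγ} (ht : t.Ground) :
    (Tm.encode ι h c t).Ground := by
  induction t with
  | var n => exact ht
  | app g ts ih =>
    rw [Tm.encode]
    by_cases hg : ∃ s, ι s = g
    · obtain ⟨s, rfl⟩ := hg
      rw [Tm.encodeHead_apply ι h c hι]
      exact fun i => ih _ (ht _)
    · rw [Tm.encodeHead_of_not_mem ι h c hg]
      refine Tm.Ground.comb fun k => ?_
      split_ifs
      exacts [ih _ (ht _), fun i => Fin.elim0 i]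

namespace BTA

theorem Reach.app_inv {α Q : Type} {arα : α → ℕ} {A : BTA α arα Q} {g : α}
    {ts : Fin (arα g) → Tm α arα} {q : Q} (hr : A.Reach (Tm.app g ts) q) :
    ∃ qs : Fin (arα g) → Q, (∀ i, A.Reach (ts i) (qs i)) ∧
      ∀ ts', (∀ i, A.Reach (ts' i) (qs i)) → A.Reach (Tm.app g ts') q := by
  generalize ht : Tm.app g ts = t at hr
  induction hr with
  | app hts htr _ =>
    cases ht
    exact ⟨_, hts, fun ts' h' => .app h' htr⟩
  | eps _ he ih =>
    obtain ⟨qs, h1, h2⟩ := ih ht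
    exact ⟨qs, h1, fun ts' h' => .eps (h2 ts' h') he⟩

theorem not_reach_var {α Q : Type} {arα : α → ℕ} (A : BTA α arα Q) (n : ℕ) (q : Q) :
    ¬ A.Reach (Tm.var n) q := by
  intro hr
  generalize ht : Tm.var n = t at hr
  induction hr with
  | app => cases ht
  | eps _ _ ih => exact ih ht

variable {Q : Type} {A : BTA (σ ⊕ Bool) (arExt ar) Q}

theorem Reach.pair_inv {u v : Tm (σ ⊕ Bool) (arExt ar)} {q : Q}
    (hr : A.Reach (Tm.pair u v) q) :
    ∃ q₁ q₂, A.Reach u q₁ ∧ A.Reach v q₂ ∧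
      ∀ u' v', A.Reach u' q₁ → A.Reach v' q₂ → A.Reach (Tm.pair u' v') q := by
  obtain ⟨qs, h1, h2⟩ := Reach.app_inv hr
  refine ⟨qs (0 : Fin 2), qs (1 : Fin 2), h1 (0 : Fin 2), h1 (1 : Fin 2), fun u' v' hu hv => ?_⟩
  refine h2 _ fun i => ?_
  change Fin 2 at i
  fin_cases i
  exacts [hu, hv]

theorem Reach.comb_inv {l : ℕ} {a : ℕ → Tm (σ ⊕ Bool) (arExt ar)} {q : Q}
    (hr : A.Reach (Tm.comb l a) q) :
    ∃ qs : ℕ → Q, (∀ k < l, A.Reach (a k) (qs k)) ∧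
      ∀ a', (∀ k < l, A.Reach (a' k) (qs k)) → A.Reach (Tm.comb l a') q := by
  induction l generalizing a q with
  | zero => exact ⟨fun _ => q, by simp, fun _ _ => hr⟩
  | succ l ih =>
    obtain ⟨q₁, q₂, h1, h2, h3⟩ := Reach.pair_inv hr
    obtain ⟨qs, h4, h5⟩ := ih h2
    refine ⟨fun k => k.casesOn q₁ qs, ?_, fun a' ha' => ?_⟩
    · rintro (_ | k) hk
      exacts [h1, h4 k (by omega)]
    · exact h3 _ _ (ha' 0 (by omega)) (h5 _ fun k hk => ha' (k + 1) (by omega))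

theorem Reach.encodeHead_inv (hι : Function.Injective ι) (hle : ∀ g, arγ g ≤ c g) {g : γ}
    {us : Fin (arγ g) → Tm (σ ⊕ Bool) (arExt ar)} {q : Q}
    (hr : A.Reach (Tm.encodeHead ι h c g us) q) :
    ∃ qs : Fin (arγ g) → Q, (∀ i, A.Reach (us i) (qs i)) ∧
      ∀ us', (∀ i, A.Reach (us' i) (qs i)) → A.Reach (Tm.encodeHead ι h c g us') q := by
  by_cases hg : ∃ s, ι s = g
  · obtain ⟨s, rfl⟩ := hg
    rw [Tm.encodeHead_apply ι h c hι] at hr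
    obtain ⟨qs, h1, h2⟩ := hr.app_inv
    refine ⟨fun i => qs (Fin.cast (h s) i), fun i => h1 (Fin.cast (h s) i), fun us' hu => ?_⟩
    rw [Tm.encodeHead_apply ι h c hι]
    exact h2 _ fun i => hu (Fin.cast (h s).symm i)
  · rw [Tm.encodeHead_of_not_mem ι h c hg] at hr
    obtain ⟨qs, h1, h2⟩ := hr.comb_inv
    have hlt : ∀ i : Fin (arγ g), (i : ℕ) < c g + 1 := fun i => by have := hle g; omega
    refine ⟨fun i => qs i, fun i => by simpa using h1 i (hlt i), fun us' hu => ?_⟩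
    rw [Tm.encodeHead_of_not_mem ι h c hg]
    refine h2 _ fun k hk => ?_
    have := h1 k hk
    split_ifs with hk'
    · exact hu ⟨k, hk'⟩
    · simpa [hk'] using this

variable (ι h c) in
/-- The automaton that runs `A` on codes. -/
noncomputable def comapEncode (A : BTA (σ ⊕ Bool) (arExt ar) Q) : BTA γ arγ Q where
  trans g qs q := ∀ us, (∀ i, A.Reach (us i) (qs i)) → A.Reach (Tm.encodeHead ι h c g us) q
  eps _ _ := False
  final := A.final

theorem reach_comapEncode (hι : Function.Injective ι) (hle : ∀ g, arγ g ≤ c g)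
    {t : Tm γ arγ} {q : Q} :
    (A.comapEncode ι h c).Reach t q ↔ A.Reach (Tm.encode ι h c t) q := by
  constructor
  · intro hr
    induction hr with
    | app _ htr ih => exact htr _ ih
    | eps _ he => exact he.elim
  · intro hr
    induction t generalizing q with
    | var n => exact (A.not_reach_var n q hr).elim
    | app g ts ih =>
      obtain ⟨qs, h1, h2⟩ := Reach.encodeHead_inv hι hle hr
      exact .app (fun i => ih i (h1 i)) h2

end BTA

theorem Recognizable.preimage_encode (hι : Function.Injective ι) (hle : ∀ g, arγ g ≤ c g)
    {L : Set (Tm (σ ⊕ Bool) (arExt ar))} (hL : Recognizable L) :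
    Recognizable (Tm.encode ι h c ⁻¹' L) := by
  obtain ⟨Q, hQ, A, rfl⟩ := hL
  refine ⟨Q, hQ, A.comapEncode ι h c, ?_⟩
  ext t
  exact exists_congr fun q => and_congr_right fun _ => BTA.reach_comapEncode hι hle

end Coding

theorem stmt_8 {σ : Type} {ar : σ → ℕ} [Finite σ]
    (R : Set (Tm σ ar × Tm σ ar)) (hR : IsTRS R)
    -- `R` is a TRS over `sign(R)`: every symbol of the alphabet occurs in `R`
    (hsign : ∀ s : σ, ∃ lr ∈ R, lr.1.symOccurs s ∨ lr.2.symOccurs s) :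
    -- `R` preserves `Σ`-recognizability of finite tree languages …
    (∀ L : Set (Tm (σ ⊕ Bool) (arExt ar)), L.Finite → (∀ t ∈ L, t.Ground) →
        Recognizable (Desc (mapRules Sum.inl (fun _ => rfl) R) L)) ↔
      -- … iff `R` preserves recognizability of finite tree languages.
      PRF R := by
  refine ⟨fun H γ arγ hγ ι hι h L hL hg => ?_, fun H L hL hg =>
    H (σ ⊕ Bool) (arExt ar) inferInstance Sum.inl Sum.inl_injective (fun _ => rfl) L hL hg⟩
  obtain ⟨e, he⟩ := exists_injective_nat γ
  let c : γ → ℕ := fun g => Nat.pair (e g) (arγ g)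
  have hc : Function.Injective c := fun g g' hgg => he (Nat.pair_eq_pair.1 hgg).1
  have hle : ∀ g, arγ g ≤ c g := fun g => Nat.right_le_pair _ _
  have hrec := H (Tm.encode ι h c '' L) (hL.image _) (by
    rintro _ ⟨t, ht, rfl⟩
    exact (hg t ht).encode hι)
  convert hrec.preimage_encode (ι := ι) (h := h) (c := c) hι hle using 1
  ext t
  simp only [Desc, Set.mem_preimage, Set.mem_ofPred_eq, Set.exists_mem_image]
  exact exists_congr fun q => and_congr_right fun _ =>
    (Steps.encode_iff hR.2 hι hc hle).symm
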